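/- A list τ of hexatags of length 2n − 1 (n ≥ 1) equals hexatags(T) for some binary head tree T with n leaves if and only if τ is valid, i.e., (i) every tag of τ at an odd position is terminal and every tag at an even position is nonterminal; (ii) the first tag of τ is tL; (iii) for every position k at which τₖ ∈ {⇒L, ⇒R}, the running stack count s₍ₖ₋₁₎ is at least 2; and (iv) the final stack count s₍₂ₙ₋₁₎ equals 1. -/

import Mathlib

/-- Binary head trees (BHTs). -/
inductive BHT : Type where
  | leaf : BHT
  | nodeL (l r : BHT) : BHT
  | nodeR (l r : BHT) : BHT

/-- Number of leaves of a BHT. -/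
def BHT.numLeaves : BHT → ℕ
  | .leaf => 1
  | .nodeL l r => l.numLeaves + r.numLeaves
  | .nodeR l r => l.numLeaves + r.numLeaves

/-- Head position of a BHT whose span of leaf positions starts at `i`. -/
def BHT.headAt : BHT → ℕ → ℕ
  | .leaf, i => i
  | .nodeL l _, i => l.headAt i
  | .nodeR l r, i => r.headAt (i + l.numLeaves)

/-- Head position of a BHT placed over positions `0, …, numLeaves - 1`. -/
def BHT.head (T : BHT) : ℕ := T.headAt 0

/-- Arc set of a BHT whose span of leaf positions starts at `i`. -/
def BHT.arcsAt : BHT → ℕ → Set (ℕ × ℕ)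
  | .leaf, _ => ∅
  | .nodeL l r, i =>
      insert (l.headAt i, r.headAt (i + l.numLeaves)) (l.arcsAt i ∪ r.arcsAt (i + l.numLeaves))
  | .nodeR l r, i =>
      insert (r.headAt (i + l.numLeaves), l.headAt i) (l.arcsAt i ∪ r.arcsAt (i + l.numLeaves))

/-- Arc set of a BHT placed over positions `0, …, numLeaves - 1`. -/
def BHT.arcs (T : BHT) : Set (ℕ × ℕ) := T.arcsAt 0

/-- `S` is a subtree of `T` (placed over positions `0, …, numLeaves - 1`) whose
leaf span starts at absolute position `i`. -/
inductive BHT.SubtreeAt : BHT → ℕ → BHT → Prop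
  | refl (T : BHT) : BHT.SubtreeAt T 0 T
  | inlL (l r S : BHT) (i : ℕ) : BHT.SubtreeAt l i S → BHT.SubtreeAt (BHT.nodeL l r) i S
  | inrL (l r S : BHT) (i : ℕ) :
      BHT.SubtreeAt r i S → BHT.SubtreeAt (BHT.nodeL l r) (l.numLeaves + i) S
  | inlR (l r S : BHT) (i : ℕ) : BHT.SubtreeAt l i S → BHT.SubtreeAt (BHT.nodeR l r) i S
  | inrR (l r S : BHT) (i : ℕ) :
      BHT.SubtreeAt r i S → BHT.SubtreeAt (BHT.nodeR l r) (l.numLeaves + i) S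

/-- `bht2dep T j = some i` if `i` is the unique position with `(i, j) ∈ arcs T`,
and `none` if `j` has no incoming arc. -/
noncomputable def bht2dep (n : ℕ) (T : BHT) : Fin n → Option (Fin n) := fun j =>
  letI := Classical.dec (∃! i : Fin n, ((i : ℕ), (j : ℕ)) ∈ T.arcs)
  if h : ∃! i : Fin n, ((i : ℕ), (j : ℕ)) ∈ T.arcs then some h.choose else none

/-- `head` is a dependency tree on `n` words: exactly one root (position with
`head r = none`), and every position reaches the root by iterating `head`. -/
def IsDepTree {n : ℕ} (head : Fin n → Option (Fin n)) : Prop :=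
  ∃ r : Fin n, head r = none ∧ (∀ r' : Fin n, head r' = none → r' = r) ∧
    ∀ j : Fin n, Relation.ReflTransGen (fun a b => head a = some b) j r

/-- A dependency tree is projective if every position's set of descendants is an
interval of consecutive positions. -/
def Projective {n : ℕ} (head : Fin n → Option (Fin n)) : Prop :=
  ∀ i : Fin n, ∃ a b : Fin n,
    ∀ j : Fin n, Relation.ReflTransGen (fun x y => head x = some y) j i ↔ (a ≤ j ∧ j ≤ b)

/-- The six hexatags: `tL`/`tR` are terminal tags (leaf that is a left/right child);
`leftL`/`leftR` are `⇐L`/`⇐R` (internal left child with head-label L/R);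
`rightL`/`rightR` are `⇒L`/`⇒R` (internal right child with head-label L/R). -/
inductive Hexatag : Type where
  | tL | tR | leftL | leftR | rightL | rightR
deriving DecidableEq

/-- A hexatag is terminal if it is `tL` or `tR`. -/
def Hexatag.isTerminal : Hexatag → Prop
  | .tL => True
  | .tR => True
  | _ => False

/-- In-order linearization; the Boolean records whether the current subtree is a
right child of its parent (the root counts as a left child by convention). -/
def BHT.hexatagsAux : BHT → Bool → List Hexatag
  | .leaf, false => [.tL]
  | .leaf, true => [.tR]
  | .nodeL l r, b =>
      l.hexatagsAux false ++ (if b then Hexatag.rightL else Hexatag.leftL) :: r.hexatagsAux true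
  | .nodeR l r, b =>
      l.hexatagsAux false ++ (if b then Hexatag.rightR else Hexatag.leftR) :: r.hexatagsAux true

/-- The hexatag linearization of a BHT. -/
def BHT.hexatags (T : BHT) : List Hexatag := T.hexatagsAux false

/-- The tags emitted for the leaves of a BHT, in left-to-right order. -/
def BHT.leafTagsAux : BHT → Bool → List Hexatag
  | .leaf, false => [.tL]
  | .leaf, true => [.tR]
  | .nodeL l r, _ => l.leafTagsAux false ++ r.leafTagsAux true
  | .nodeR l r, _ => l.leafTagsAux false ++ r.leafTagsAux true

/-- The tags emitted for the leaves of a BHT in left-to-right order (root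
counts as a left child by convention). -/
def BHT.leafTags (T : BHT) : List Hexatag := T.leafTagsAux false

/-- Partial BHTs: binary head trees possibly containing a dummy placeholder. -/
inductive PBHT : Type where
  | dummy : PBHT
  | leaf : PBHT
  | nodeL (l r : PBHT) : PBHT
  | nodeR (l r : PBHT) : PBHT
deriving DecidableEq

/-- Does a partial BHT contain a dummy? -/
def PBHT.hasDummy : PBHT → Bool
  | .dummy => true
  | .leaf => false
  | .nodeL l r => l.hasDummy || r.hasDummy
  | .nodeR l r => l.hasDummy || r.hasDummy

/-- Substitute `u` for the dummy in a partial BHT. -/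
def PBHT.subst : PBHT → PBHT → PBHT
  | .dummy, u => u
  | .leaf, _ => .leaf
  | .nodeL l r, u => .nodeL (l.subst u) (r.subst u)
  | .nodeR l r, u => .nodeR (l.subst u) (r.subst u)

/-- One step of the left-corner decoder on a stack of partial BHTs. -/
def hexStep : List PBHT → Hexatag → Option (List PBHT)
  | st, .tL => some (.leaf :: st)
  | t :: st, .tR => if t.hasDummy then some (t.subst .leaf :: st) else none
  | t :: st, .leftL => some (.nodeL t .dummy :: st)
  | t :: st, .leftR => some (.nodeR t .dummy :: st)
  | t :: u :: st, .rightL =>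
      if u.hasDummy then some (u.subst (.nodeL t .dummy) :: st) else none
  | t :: u :: st, .rightR =>
      if u.hasDummy then some (u.subst (.nodeR t .dummy) :: st) else none
  | _, _ => none

/-- The left-corner decoder: run the stack operations; succeed iff every
operation is defined and the final stack is a single dummy-free tree. -/
def tags2bht (τ : List Hexatag) : Option PBHT :=
  match τ.foldlM hexStep ([] : List PBHT) with
  | some [t] => if t.hasDummy then none else some t
  | _ => none

/-- Embedding of BHTs into partial BHTs. -/
def BHT.toPBHT : BHT → PBHT
  | .leaf => .leaf
  | .nodeL l r => .nodeL l.toPBHT r.toPBHT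
  | .nodeR l r => .nodeR l.toPBHT r.toPBHT

/-- Stack-count increment of a hexatag. -/
def Hexatag.delta : Hexatag → ℤ
  | .tL => 1
  | .tR => 0
  | .leftL => 0
  | .leftR => 0
  | .rightL => -1
  | .rightR => -1

/-- Running stack count `sₖ` after the first `k` tags of `τ`. -/
def stackCount (τ : List Hexatag) (k : ℕ) : ℤ :=
  ((τ.take k).map Hexatag.delta).sum

/-- Validity of a hexatag list (0-indexed: Lean index `k` is 1-indexed position `k+1`). -/
def ValidTags (τ : List Hexatag) : Prop :=
  (τ.length % 2 = 1 ∧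
    ∀ k : ℕ, ∀ t : Hexatag, τ[k]? = some t →
      (k % 2 = 0 → t.isTerminal) ∧ (k % 2 = 1 → ¬ t.isTerminal)) ∧
  τ[0]? = some Hexatag.tL ∧
  (∀ k : ℕ, ∀ t : Hexatag, τ[k]? = some t →
    (t = Hexatag.rightL ∨ t = Hexatag.rightR) → 2 ≤ stackCount τ k) ∧
  stackCount τ τ.length = 1

/-!
In-order linearizations are generated by a grammar: a left child yields `tL` or `u ⇐ v` and a right
child yields `tR` or `u ⇒ v`, where `u` comes from a left child and `v` from a right child.
Induction on the grammar shows that every linearization is valid.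

Conversely, call a word open if appending the linearization of any right child completes it to the
linearization of a left child; this is what one partial tree on the decoding stack has emitted.
Reading a valid word from left to right, every prefix ending in a nonterminal tag is a product of
open words, and every prefix ending in a terminal tag is such a product times the linearization of
a left child. Each factor has total stack effect 1, so the stack count is the number of factors:
condition (iii) says that a tag `⇒` always finds an open word to merge with, and condition (iv)
that a single factor remains at the end.
-/

namespace Hexatag

/-- The nonterminal tags of internal left children (`isRight = false`), i.e. `⇐L` and `⇐R`,
or of internal right children (`isRight = true`), i.e. `⇒L` and `⇒R`. -/
def internal (isRight : Bool) : Set Hexatag :=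
  if isRight then {rightL, rightR} else {leftL, leftR}

variable {b : Bool} {x : Hexatag}

theorem mem_internal_true : x ∈ internal true ↔ x = rightL ∨ x = rightR := Iff.rfl

theorem mem_internal_or_of_not_isTerminal (hx : ¬ x.isTerminal) :
    x ∈ internal false ∨ x ∈ internal true := by
  cases x <;> simp_all [internal, isTerminal]

theorem not_isTerminal_of_mem_internal (hx : x ∈ internal b) : ¬ x.isTerminal := by
  cases b <;> rcases hx with rfl | rfl <;> exact id

theorem delta_of_mem_internal (hx : x ∈ internal b) : x.delta = -b.toInt := by
  cases b <;> rcases hx with rfl | rfl <;> rfl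

end Hexatag

section StackCount

variable {τ u v : List Hexatag} {k : ℕ}

theorem stackCount_length : stackCount τ τ.length = (τ.map Hexatag.delta).sum := by
  rw [stackCount, List.take_length]

theorem stackCount_append_of_le (hk : k ≤ u.length) : stackCount (u ++ v) k = stackCount u k := by
  rw [stackCount, List.take_append_of_le_length hk, stackCount]

theorem stackCount_append_length_add :
    stackCount (u ++ v) (u.length + k) = (u.map Hexatag.delta).sum + stackCount v k := by
  rw [stackCount, List.take_length_add_append, List.map_append, List.sum_append, stackCount]

theorem stackCount_cons_succ (x : Hexatag) :
    stackCount (x :: v) (k + 1) = x.delta + stackCount v k := by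
  rw [stackCount, List.take_succ_cons, List.map_cons, List.sum_cons, stackCount]

end StackCount

theorem getElem?_append_cons_cases {α : Type*} {u v : List α} {x t : α} {k : ℕ}
    (h : (u ++ x :: v)[k]? = some t) :
    (k < u.length ∧ u[k]? = some t) ∨ (k = u.length ∧ t = x) ∨
      ∃ m, k = u.length + (m + 1) ∧ v[m]? = some t := by
  rcases lt_or_ge k u.length with hk | hk
  · exact .inl ⟨hk, by rwa [List.getElem?_append_left hk] at h⟩
  · obtain ⟨m, rfl⟩ := Nat.exists_eq_add_of_le hk
    rw [List.getElem?_append_right hk, Nat.add_sub_cancel_left] at h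
    cases m with
    | zero => exact .inr (.inl ⟨rfl, (Option.some.inj h).symm⟩)
    | succ m => exact .inr (.inr ⟨m, rfl, h⟩)

/-- Terminal tags at even indices and nonterminal tags at odd ones, as in condition (i) of
validity; indices start at `0`. -/
def Alternating (τ : List Hexatag) : Prop :=
  ∀ k : ℕ, ∀ t : Hexatag, τ[k]? = some t →
    (k % 2 = 0 → t.isTerminal) ∧ (k % 2 = 1 → ¬ t.isTerminal)

/-- Condition (iii) of validity for a word that is read when the stack count is already `s`. -/
def PopSafe (s : ℤ) (τ : List Hexatag) : Prop :=
  ∀ k : ℕ, ∀ t : Hexatag, τ[k]? = some t → t ∈ Hexatag.internal true → 2 ≤ s + stackCount τ k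

theorem Alternating.singleton {x : Hexatag} (hx : x.isTerminal) : Alternating [x] := by
  intro k t hk
  rw [List.getElem?_singleton, Option.ite_none_right_eq_some, Option.some_inj] at hk
  obtain ⟨rfl, rfl⟩ := hk
  exact ⟨fun _ => hx, fun hodd => by omega⟩

theorem PopSafe.singleton {s : ℤ} {x : Hexatag} (hx : x.isTerminal) : PopSafe s [x] := by
  intro k t hk ht
  rw [List.getElem?_singleton, Option.ite_none_right_eq_some, Option.some_inj] at hk
  obtain ⟨rfl, rfl⟩ := hk
  exact absurd hx (Hexatag.not_isTerminal_of_mem_internal ht)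

theorem Alternating.append_cons {u v : List Hexatag} {x : Hexatag} (hu : Alternating u)
    (hodd : u.length % 2 = 1) (hx : ¬ x.isTerminal) (hv : Alternating v) :
    Alternating (u ++ x :: v) := by
  intro k t hk
  rcases getElem?_append_cons_cases hk with ⟨-, hk⟩ | ⟨rfl, rfl⟩ | ⟨m, rfl, hm⟩
  · exact hu k t hk
  · exact ⟨fun heven => by omega, fun _ => hx⟩
  · exact ⟨fun heven => (hv m t hm).1 (by omega), fun hodd => (hv m t hm).2 (by omega)⟩

theorem PopSafe.append_cons {s : ℤ} {u v : List Hexatag} {x : Hexatag} (hu : PopSafe s u)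
    (hx : x ∈ Hexatag.internal true → 2 ≤ s + (u.map Hexatag.delta).sum)
    (hv : PopSafe (s + (u.map Hexatag.delta).sum + x.delta) v) :
    PopSafe s (u ++ x :: v) := by
  intro k t hk ht
  rcases getElem?_append_cons_cases hk with ⟨hlt, hk⟩ | ⟨rfl, rfl⟩ | ⟨m, rfl, hm⟩
  · rw [stackCount_append_of_le hlt.le]
    exact hu k t hk ht
  · rw [stackCount_append_of_le le_rfl, stackCount_length]
    exact hx ht
  · rw [stackCount_append_length_add, stackCount_cons_succ, ← add_assoc, ← add_assoc]
    exact hv m t hm ht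

/-- The grammar of in-order linearizations of head trees: `IsLinearization b w` says that `w`
linearizes a subtree which is a right child if `b = true` and a left child (or the root) if
`b = false`. The head labels are not tracked, which merges `BHT.nodeL` and `BHT.nodeR`. -/
inductive IsLinearization : Bool → List Hexatag → Prop
  | tL : IsLinearization false [.tL]
  | tR : IsLinearization true [.tR]
  | node {b : Bool} {u v : List Hexatag} {x : Hexatag} (hx : x ∈ Hexatag.internal b)
      (hu : IsLinearization false u) (hv : IsLinearization true v) :
      IsLinearization b (u ++ x :: v)

theorem BHT.isLinearization_hexatagsAux (T : BHT) (b : Bool) :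
    IsLinearization b (T.hexatagsAux b) := by
  induction T generalizing b with
  | leaf => cases b; exacts [.tL, .tR]
  | nodeL l r ihl ihr | nodeR l r ihl ihr =>
    exact .node (by cases b <;> simp [Hexatag.internal]) (ihl false) (ihr true)

theorem BHT.length_hexatagsAux_add_one (T : BHT) (b : Bool) :
    (T.hexatagsAux b).length + 1 = 2 * T.numLeaves := by
  induction T generalizing b with
  | leaf => cases b <;> rfl
  | nodeL l r ihl ihr | nodeR l r ihl ihr =>
    have hl := ihl false
    have hr := ihr true
    simp only [hexatagsAux, numLeaves, List.length_append, List.length_cons]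
    omega

namespace IsLinearization

variable {b : Bool} {w : List Hexatag}

theorem exists_hexatagsAux_eq (h : IsLinearization b w) : ∃ T : BHT, T.hexatagsAux b = w := by
  induction h with
  | tL | tR => exact ⟨.leaf, rfl⟩
  | @node b _ _ _ hx _ _ ihu ihv =>
    obtain ⟨l, rfl⟩ := ihu
    obtain ⟨r, rfl⟩ := ihv
    cases b <;> rcases hx with rfl | rfl
    exacts [⟨.nodeL l r, rfl⟩, ⟨.nodeR l r, rfl⟩, ⟨.nodeL l r, rfl⟩, ⟨.nodeR l r, rfl⟩]

theorem length_mod_two (h : IsLinearization b w) : w.length % 2 = 1 := by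
  obtain ⟨T, rfl⟩ := h.exists_hexatagsAux_eq
  have := T.length_hexatagsAux_add_one b
  omega

theorem tL_prefix (h : IsLinearization false w) : [Hexatag.tL] <+: w := by
  generalize hb : false = b at h
  induction h with
  | tL => exact List.prefix_rfl
  | tR => cases hb
  | node _ _ _ ihu _ => exact (ihu rfl).trans (List.prefix_append _ _)

theorem sum_delta (h : IsLinearization b w) : (w.map Hexatag.delta).sum = 1 - b.toInt := by
  induction h with
  | tL | tR => rfl
  | node hx _ _ ihu ihv =>
    rw [List.map_append, List.sum_append, List.map_cons, List.sum_cons, ihu, ihv,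
      Hexatag.delta_of_mem_internal hx]
    simp [sub_eq_add_neg]

theorem alternating (h : IsLinearization b w) : Alternating w := by
  induction h with
  | tL | tR => exact .singleton trivial
  | node hx hu _ ihu ihv =>
    exact ihu.append_cons hu.length_mod_two (Hexatag.not_isTerminal_of_mem_internal hx) ihv

theorem popSafe (h : IsLinearization b w) {s : ℤ} (hs : b.toInt ≤ s) : PopSafe s w := by
  induction h generalizing s with
  | tL | tR => exact .singleton trivial
  | @node b _ _ _ hx hu _ ihu ihv =>
    have hs₀ : false.toInt ≤ s := le_trans (by cases b <;> decide) hs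
    have hsum := hu.sum_delta
    have hdelta := Hexatag.delta_of_mem_internal hx
    rw [Bool.toInt_false, sub_zero] at hsum
    refine (ihu hs₀).append_cons (fun hpop => ?_) (ihv ?_)
    · have hdelta' := Hexatag.delta_of_mem_internal hpop
      rw [Bool.toInt_true] at hdelta'
      omega
    · rw [Bool.toInt_true]
      omega

theorem validTags (h : IsLinearization false w) : ValidTags w := by
  refine ⟨⟨h.length_mod_two, h.alternating⟩, ?_, fun k t hk ht => ?_, ?_⟩
  · obtain ⟨v, rfl⟩ := h.tL_prefix
    rfl
  · simpa only [zero_add] using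
      h.popSafe (s := 0) le_rfl k t hk (Hexatag.mem_internal_true.mpr ht)
  · exact stackCount_length.trans h.sum_delta

end IsLinearization

/-- The linearizations of whole trees, or equivalently of left children. -/
def leftWords : Language Hexatag := {w | IsLinearization false w}

/-- The words that become the linearization of a left child when completed by the linearization of
any right child. These encode the partial trees with a dummy on the decoding stack. -/
def openWords : Language Hexatag :=
  {p | ∀ r, IsLinearization true r → IsLinearization false (p ++ r)}

section Decoding

variable {p w : List Hexatag} {x : Hexatag} {m : ℕ}

theorem append_mem_openWords_of_mem_leftWords (hw : w ∈ leftWords)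
    (hx : x ∈ Hexatag.internal false) : w ++ [x] ∈ openWords := fun r hr => by
  simpa only [List.append_assoc, List.singleton_append] using .node hx hw hr

theorem append_append_mem_openWords (hp : p ∈ openWords) (hw : w ∈ leftWords)
    (hx : x ∈ Hexatag.internal true) : p ++ (w ++ [x]) ∈ openWords := fun r hr => by
  simpa only [List.append_assoc, List.singleton_append] using hp _ (.node hx hw hr)

theorem append_tR_mem_leftWords (hp : p ∈ openWords) : p ++ [.tR] ∈ leftWords :=
  hp _ .tR

theorem sum_delta_of_mem_openWords (hp : p ∈ openWords) : (p.map Hexatag.delta).sum = 1 := by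
  simpa [Hexatag.delta] using (append_tR_mem_leftWords hp).sum_delta

theorem sum_delta_of_mem_openWords_pow (hw : w ∈ openWords ^ m) :
    (w.map Hexatag.delta).sum = m := by
  induction m generalizing w with
  | zero =>
    obtain rfl : w = [] := by simpa using hw
    rfl
  | succ m ih =>
    rw [pow_succ] at hw
    obtain ⟨u, hu, p, hp, rfl⟩ := Language.mem_mul.mp hw
    rw [List.map_append, List.sum_append, ih hu, sum_delta_of_mem_openWords hp, Nat.cast_succ]

theorem sum_delta_of_mem_openWords_pow_mul_leftWords (hw : w ∈ openWords ^ m * leftWords) :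
    (w.map Hexatag.delta).sum = m + 1 := by
  obtain ⟨u, hu, v, hv, rfl⟩ := Language.mem_mul.mp hw
  rw [List.map_append, List.sum_append, sum_delta_of_mem_openWords_pow hu,
    IsLinearization.sum_delta hv, Bool.toInt_false, sub_zero]

theorem exists_append_nonterminal_mem_openWords_pow (hw : w ∈ openWords ^ m * leftWords)
    (hx : ¬ x.isTerminal) (hpop : x ∈ Hexatag.internal true → 2 ≤ (w.map Hexatag.delta).sum) :
    ∃ n, w ++ [x] ∈ openWords ^ (n + 1) := by
  have hsum := sum_delta_of_mem_openWords_pow_mul_leftWords hw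
  obtain ⟨u, hu, v, hv, rfl⟩ := Language.mem_mul.mp hw
  rcases Hexatag.mem_internal_or_of_not_isTerminal hx with hleft | hright
  · refine ⟨m, ?_⟩
    rw [pow_succ, List.append_assoc]
    exact Language.append_mem_mul hu (append_mem_openWords_of_mem_leftWords hv hleft)
  · have := hpop hright
    obtain ⟨n, rfl⟩ : ∃ n, m = n + 1 := Nat.exists_eq_add_one.mpr (by omega)
    rw [pow_succ] at hu
    obtain ⟨w', hw', p, hp, rfl⟩ := Language.mem_mul.mp hu
    refine ⟨n, ?_⟩
    rw [pow_succ, List.append_assoc, List.append_assoc]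
    exact Language.append_mem_mul hw' (append_append_mem_openWords hp hv hright)

theorem exists_append_terminal_mem_openWords_pow_mul_leftWords (hw : w ∈ openWords ^ (m + 1))
    (hx : x.isTerminal) : ∃ n, w ++ [x] ∈ openWords ^ n * leftWords := by
  cases x with
  | tL => exact ⟨m + 1, Language.append_mem_mul hw .tL⟩
  | tR =>
    rw [pow_succ] at hw
    obtain ⟨u, hu, p, hp, rfl⟩ := Language.mem_mul.mp hw
    refine ⟨m, ?_⟩
    rw [List.append_assoc]
    exact Language.append_mem_mul hu (append_tR_mem_leftWords hp)
  | leftL | leftR | rightL | rightR => exact hx.elim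

end Decoding

namespace ValidTags

variable {τ : List Hexatag}

theorem exists_take_mem_openWords_pow_mul_leftWords (h : ValidTags τ) {k : ℕ}
    (hk : 2 * k + 1 ≤ τ.length) : ∃ m, τ.take (2 * k + 1) ∈ openWords ^ m * leftWords := by
  obtain ⟨⟨-, halt⟩, hfirst, hpop, -⟩ := h
  induction k with
  | zero =>
    refine ⟨0, ?_⟩
    rw [pow_zero, one_mul, List.take_add_one, hfirst]
    exact .tL
  | succ k ih =>
    obtain ⟨m, hm⟩ := ih (by omega)
    have hlt₁ : 2 * k + 1 < τ.length := by omega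
    have hlt₂ : 2 * k + 2 < τ.length := by omega
    have hx := List.getElem?_eq_getElem hlt₁
    have hy := List.getElem?_eq_getElem hlt₂
    obtain ⟨n, hn⟩ := exists_append_nonterminal_mem_openWords_pow hm
      ((halt _ _ hx).2 (by omega))
      fun hright => hpop _ _ hx (Hexatag.mem_internal_true.mp hright)
    rw [show 2 * (k + 1) + 1 = 2 * k + 2 + 1 by ring, ← List.take_append_getElem hlt₂,
      ← List.take_append_getElem hlt₁]
    exact exists_append_terminal_mem_openWords_pow_mul_leftWords hn ((halt _ _ hy).1 (by omega))

theorem isLinearization (h : ValidTags τ) : IsLinearization false τ := by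
  have hlen : 2 * (τ.length / 2) + 1 = τ.length := by
    have := h.1.1
    omega
  obtain ⟨m, hm⟩ := h.exists_take_mem_openWords_pow_mul_leftWords hlen.le
  rw [hlen, List.take_length] at hm
  have hsum : (τ.map Hexatag.delta).sum = 1 := stackCount_length.symm.trans h.2.2.2
  obtain rfl : m = 0 := by
    have := sum_delta_of_mem_openWords_pow_mul_leftWords hm
    omega
  rwa [pow_zero, one_mul] at hm

end ValidTags

theorem hexatags_range_iff_valid (n : ℕ) (hn : 1 ≤ n) (τ : List Hexatag)
    (hlen : τ.length = 2 * n - 1) :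
    (∃ T : BHT, T.numLeaves = n ∧ τ = T.hexatags) ↔ ValidTags τ := by
  constructor
  · rintro ⟨T, -, rfl⟩
    exact (T.isLinearization_hexatagsAux false).validTags
  · intro h
    obtain ⟨T, rfl⟩ := h.isLinearization.exists_hexatagsAux_eq
    have := T.length_hexatagsAux_add_one false
    exact ⟨T, by omega, rfl⟩
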